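/- If X is a vacuously normal topological space, Y is a normal T1 topological space, and the product X × Y is normal, then the projection π_Y : X × Y → Y is a closed map. -/

import Mathlib

/-- A space is vacuously normal if it contains no pair of disjoint
nonempty closed subsets. -/
def VacuouslyNormal (X : Type*) [TopologicalSpace X] : Prop :=
  ∀ F H : Set X, IsClosed F → IsClosed H → F.Nonempty → H.Nonempty → ¬ Disjoint F H

/-! A continuous real function on a vacuously normal space is constant, because distinct values
would have disjoint nonempty closed fibres. Let `C` be closed in `X × Y` and let `y` lie outside
the projection of `C`. Since `{y}` is closed, Urysohn's lemma on `X × Y` gives a continuous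
function equal to `0` on `C` and `1` on `X × {y}`. It is constant on every slice `X × {z}`, so it
is determined by its restriction to `{x₀} × Y`, which vanishes on the projection of `C` and is `1`
at `y`. Hence `y` is not in the closure of the projection. -/

theorem VacuouslyNormal.apply_eq {X : Type*} [TopologicalSpace X] (hX : VacuouslyNormal X)
    {f : X → ℝ} (hf : Continuous f) (a b : X) : f a = f b := by
  by_contra hne
  refine hX (f ⁻¹' {f a}) (f ⁻¹' {f b}) (isClosed_singleton.preimage hf)
    (isClosed_singleton.preimage hf) ⟨a, rfl⟩ ⟨b, rfl⟩ ?_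
  exact Disjoint.preimage f (Set.disjoint_singleton.2 hne)

theorem closed_proj_of_normal_prod
    (X Y : Type*) [TopologicalSpace X] [TopologicalSpace Y]
    [Nonempty X] (hX : VacuouslyNormal X) (hY : NormalSpace Y) [T1Space Y]
    (hprod : NormalSpace (X × Y)) :
    IsClosedMap (Prod.snd : X × Y → Y) := by
  intro C hC
  obtain ⟨x₀⟩ := ‹Nonempty X›
  refine isClosed_of_closure_subset fun y hy => ?_
  by_contra hyC
  have hdisj : Disjoint C (Prod.snd ⁻¹' {y}) :=
    Set.disjoint_left.2 fun p hp hpy => hyC ⟨p, hp, hpy⟩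
  obtain ⟨f, hf0, hf1, -⟩ := exists_continuous_zero_one_of_isClosed hC
    (isClosed_singleton.preimage continuous_snd) hdisj
  have hg : Continuous fun z : Y => f (x₀, z) := by fun_prop
  have hsub : Prod.snd '' C ⊆ (fun z : Y => f (x₀, z)) ⁻¹' {0} := by
    rintro _ ⟨⟨x, z⟩, hp, rfl⟩
    have hslice : Continuous fun x : X => f (x, z) := by fun_prop
    exact (hX.apply_eq hslice x₀ x).trans (hf0 hp)
  have h0 : f (x₀, y) = 0 := closure_minimal hsub (isClosed_singleton.preimage hg) hy
  have h1 : f (x₀, y) = 1 := hf1 (show (x₀, y) ∈ Prod.snd ⁻¹' {y} from rfl)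
  exact zero_ne_one (h0.symm.trans h1)
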